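/- For every dimension d ≥ 2, the critical point of Bernoulli bond percolation on ℤ^d satisfies 0 < p_c(ℤ^d) < 1. -/

import Mathlib

open MeasureTheory

namespace Perc

/-- Vertices of `ℤ^d`. -/
abbrev Vertex (d : ℕ) := Fin d → ℤ

/-- Nearest-neighbour adjacency in `ℤ^d`: `‖x − y‖₁ = 1`. -/
def adj {d : ℕ} (x y : Vertex d) : Prop :=
  (∑ i, (x i - y i).natAbs) = 1

/-- The unordered pair `e` is a nearest-neighbour edge of `ℤ^d`. -/
def IsEdge {d : ℕ} (e : Sym2 (Vertex d)) : Prop :=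
  ∃ x y : Vertex d, adj x y ∧ e = s(x, y)

/-- The set `E` of nearest-neighbour edges of `ℤ^d`. -/
abbrev Edge (d : ℕ) := {e : Sym2 (Vertex d) // IsEdge e}

/-- Percolation configurations `ω ∈ {0,1}^E`. -/
abbrev Config (d : ℕ) := Edge d → Bool

/-- One step along an open edge of `ω`. -/
def step {d : ℕ} (ω : Config d) (x y : Vertex d) : Prop :=
  ∃ h : adj x y, ω ⟨s(x, y), x, y, h, rfl⟩ = true

/-- `x` and `y` are joined by a path of open edges. -/
def Conn {d : ℕ} (ω : Config d) : Vertex d → Vertex d → Prop :=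
  Relation.ReflTransGen (step ω)

/-- The open cluster of `x` in `ω`. -/
def cluster {d : ℕ} (ω : Config d) (x : Vertex d) : Set (Vertex d) :=
  {y | Conn ω x y}

/-- The box `Λ_n = {−n, …, n}^d`. -/
def box (d n : ℕ) : Set (Vertex d) := {x | ∀ i, |x i| ≤ (n : ℤ)}

/-- `∂Λ_n`: vertices of `Λ_n` having a nearest neighbour outside `Λ_n`. -/
def boxBoundary (d n : ℕ) : Set (Vertex d) :=
  {x | x ∈ box d n ∧ ∃ y, adj x y ∧ y ∉ box d n}

/-- The origin of `ℤ^d`. -/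
def origin (d : ℕ) : Vertex d := fun _ => 0

/-- The event `{0 ↔ ∂Λ_n}`. -/
def ZeroToBoundary (d n : ℕ) : Set (Config d) :=
  {ω | ∃ y ∈ boxBoundary d n, Conn ω (origin d) y}

/-- The event `{0 ↔ ∞}` that the open cluster of the origin is infinite. -/
def ZeroToInfinity (d : ℕ) : Set (Config d) :=
  {ω | (cluster ω (origin d)).Infinite}

/-- `μ` is the law of i.i.d. Bernoulli(p) edge variables: it is a probability measure on
`{0,1}^E` under which every finite cylinder has the corresponding product probability. -/
def IsBernoulli (d : ℕ) (p : ℝ) (μ : Measure (Config d)) : Prop :=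
  IsProbabilityMeasure μ ∧
    ∀ (s : Finset (Edge d)) (f : Edge d → Bool),
      μ {ω : Config d | ∀ e ∈ s, ω e = f e} =
        ENNReal.ofReal (∏ e ∈ s, if f e then p else 1 - p)

/-- Hierarchical goodness of level-`n` blocks of the quadrant. -/
def good (G : ℕ → ℕ → Prop) : ℕ → ℕ → ℕ → Prop
  | 0, i, j => G i j
  | n+1, i, j => ∀ a b a' b' : ℕ, a < 3 → b < 3 → a' < 3 → b' < 3 →
      ¬ good G n (3*i+a) (3*j+b) → ¬ good G n (3*i+a') (3*j+b') → a = a' ∧ b = b'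

/-- Hierarchically good sites of a block. -/
def core (G : ℕ → ℕ → Prop) : ℕ → ℕ → ℕ → Set (ℕ × ℕ)
  | 0, i, j => {(i, j)}
  | n+1, i, j => {x | ∃ a b : ℕ, a < 3 ∧ b < 3 ∧ good G n (3*i+a) (3*j+b) ∧
      x ∈ core G n (3*i+a) (3*j+b)}

lemma core_div (G : ℕ → ℕ → Prop) (n : ℕ) : ∀ i j x, x ∈ core G n i j → x.1 / 3^n = i := by
  induction n with
  | zero => intro i j x hx; simp [core] at hx; simp [hx]
  | succ n ih =>
    rintro i j x ⟨a, b, ha, hb, -, hx⟩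
    have := ih _ _ _ hx
    rw [pow_succ, ← Nat.div_div_eq_div_mul, this]; omega

lemma core_nonempty (G : ℕ → ℕ → Prop) (n : ℕ) : ∀ i j, good G n i j → (core G n i j).Nonempty := by
  induction n with
  | zero => intro i j _; simp [core]
  | succ n ih =>
    intro i j h
    by_cases h0 : good G n (3*i+0) (3*j+0)
    · obtain ⟨x, hx⟩ := ih _ _ h0
      exact ⟨x, 0, 0, by norm_num, by norm_num, h0, hx⟩
    · by_cases h1 : good G n (3*i+1) (3*j+0)
      · obtain ⟨x, hx⟩ := ih _ _ h1
        exact ⟨x, 1, 0, by norm_num, by norm_num, h1, hx⟩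
      · have := h 0 0 1 0 (by norm_num) (by norm_num) (by norm_num) (by norm_num) h0 h1
        omega

lemma core_far (G : ℕ → ℕ → Prop) (n : ℕ) (h : good G (n+1) 0 0) :
    ∃ x ∈ core G (n+1) 0 0, 3^n ≤ x.1 := by
  have key : ∃ b < 3, good G n (3*0+1) (3*0+b) := by
    by_cases h0 : good G n (3*0+1) (3*0+0)
    · exact ⟨0, by norm_num, h0⟩
    · by_cases h1 : good G n (3*0+1) (3*0+1)
      · exact ⟨1, by norm_num, h1⟩
      · have := h 1 0 1 1 (by norm_num) (by norm_num) (by norm_num) (by norm_num) h0 h1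
        omega
  obtain ⟨b, hb, hg⟩ := key
  obtain ⟨x, hx⟩ := core_nonempty G n _ _ hg
  refine ⟨x, ⟨1, b, by norm_num, hb, hg, hx⟩, ?_⟩
  have h1 := core_div G n _ _ _ hx
  have := Nat.div_mul_le_self x.1 (3^n)
  rw [h1] at this; simpa using this

lemma core_zero (G : ℕ → ℕ → Prop) (h : ∀ n, good G n 0 0) (n : ℕ) : (0, 0) ∈ core G n 0 0 := by
  induction n with
  | zero => simp [core]
  | succ n ih => exact ⟨0, 0, by norm_num, by norm_num, h n, ih⟩

lemma grid {Q : Type*} (g : ℕ → ℕ → Prop) (f : ℕ → ℕ → Q)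
    (h1 : ∀ i j, g i j → g (i+1) j → f i j = f (i+1) j)
    (h2 : ∀ i j, g i j → g i (j+1) → f i j = f i (j+1))
    (i j : ℕ) (h : ∀ a b a' b' : ℕ, a < 3 → b < 3 → a' < 3 → b' < 3 →
      ¬ g (i+a) (j+b) → ¬ g (i+a') (j+b') → a = a' ∧ b = b') :
    ∃ c, ∀ a b, a < 3 → b < 3 → g (i+a) (j+b) → f (i+a) (j+b) = c := by
  have key : ∃ u v, u < 3 ∧ v < 3 ∧ ∀ a b, a < 3 → b < 3 → ¬ (a = u ∧ b = v) →
      g (i+a) (j+b) := by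
    by_cases hh : ∃ u v, u < 3 ∧ v < 3 ∧ ¬ g (i+u) (j+v)
    · obtain ⟨u, v, hu, hv, hb⟩ := hh
      refine ⟨u, v, hu, hv, fun a b ha hb' hne => ?_⟩
      by_contra hc
      exact hne (h a b u v ha hb' hu hv hc hb)
    · push Not at hh
      exact ⟨0, 0, by norm_num, by norm_num, fun a b ha hb _ => hh a b ha hb⟩
  obtain ⟨u, v, hu, hv, hg⟩ := key
  have e1 : ∀ a b, g (i+a) (j+b) → g (i+(a+1)) (j+b) → f (i+a) (j+b) = f (i+(a+1)) (j+b) :=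
    fun a b => h1 _ _
  have e2 : ∀ a b, g (i+a) (j+b) → g (i+a) (j+(b+1)) → f (i+a) (j+b) = f (i+a) (j+(b+1)) :=
    fun a b => h2 _ _
  generalize hF : (fun a b => f (i+a) (j+b)) = F at *
  generalize hGG : (fun a b => g (i+a) (j+b)) = GG at *
  replace e1 : ∀ a b, GG a b → GG (a+1) b → F a b = F (a+1) b := by subst hF hGG; exact e1
  replace e2 : ∀ a b, GG a b → GG a (b+1) → F a b = F a (b+1) := by subst hF hGG; exact e2
  replace hg : ∀ a b, a < 3 → b < 3 → ¬ (a = u ∧ b = v) → GG a b := by subst hGG; exact hg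
  suffices H : ∃ c, ∀ a b, a < 3 → b < 3 → GG a b → F a b = c by subst hF hGG; exact H
  clear hF hGG h h1 h2
  have x1 := e1 0 0
  have x2 := e1 0 1
  have x3 := e1 0 2
  have x4 := e1 1 0
  have x5 := e1 1 1
  have x6 := e1 1 2
  have y1 := e2 0 0
  have y2 := e2 1 0
  have y3 := e2 2 0
  have y4 := e2 0 1
  have y5 := e2 1 1
  have y6 := e2 2 1
  have g1 := hg 0 0
  have g2 := hg 0 1
  have g3 := hg 0 2
  have g4 := hg 1 0
  have g5 := hg 1 1
  have g6 := hg 1 2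
  have g7 := hg 2 0
  have g8 := hg 2 1
  have g9 := hg 2 2
  clear hg e1 e2
  by_cases h0 : u = 0 ∧ v = 0
  · obtain ⟨rfl, rfl⟩ := h0
    refine ⟨F 1 1, fun a b ha hb hab => ?_⟩
    simp at *
    interval_cases a <;> interval_cases b <;> simp_all
  · refine ⟨F 0 0, fun a b ha hb hab => ?_⟩
    interval_cases u <;> interval_cases v <;> simp at * <;>
      interval_cases a <;> interval_cases b <;> grind

lemma core_conn {Q : Type*} (G : ℕ → ℕ → Prop) (q : ℕ × ℕ → Q)
    (h1 : ∀ i j, G i j → G (i+1) j → q (i, j) = q (i+1, j))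
    (h2 : ∀ i j, G i j → G i (j+1) → q (i, j) = q (i, j+1)) (n : ℕ) :
    ∃ f : ℕ → ℕ → Q, (∀ i j, good G n i j → ∀ x ∈ core G n i j, q x = f i j) ∧
      (∀ i j, good G n i j → good G n (i+1) j → f i j = f (i+1) j) ∧
      (∀ i j, good G n i j → good G n i (j+1) → f i j = f i (j+1)) := by
  induction n with
  | zero =>
    refine ⟨fun i j => q (i, j), ?_, h1, h2⟩
    intro i j _ x hx
    simp only [core, Set.mem_singleton_iff] at hx
    rw [hx]
  | succ n ih =>
    obtain ⟨f, hf, f1, f2⟩ := ih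
    have hex : ∀ i j, ∃ c, good G (n+1) i j → ∀ a b, a < 3 → b < 3 →
        good G n (3*i+a) (3*j+b) → f (3*i+a) (3*j+b) = c := by
      intro i j
      by_cases h : good G (n+1) i j
      · obtain ⟨c, hc⟩ := grid (good G n) f f1 f2 (3*i) (3*j) h
        exact ⟨c, fun _ => hc⟩
      · exact ⟨f 0 0, fun h' => absurd h' h⟩
    choose F hF using hex
    refine ⟨F, ?_, ?_, ?_⟩
    · rintro i j h x ⟨a, b, ha, hb, hg, hx⟩
      rw [hf _ _ hg x hx, hF i j h a b ha hb hg]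
    · intro i j h h'
      have key : ∃ b < 3, good G n (3*i+2) (3*j+b) ∧ good G n (3*(i+1)+0) (3*j+b) := by
        by_contra hc
        push Not at hc
        have A := fun b b' hb hb' => h 2 b 2 b' (by norm_num) hb (by norm_num) hb'
        have B := fun b b' hb hb' => h' 0 b 0 b' (by norm_num) hb (by norm_num) hb'
        have a01 := A 0 1 (by norm_num) (by norm_num)
        have a02 := A 0 2 (by norm_num) (by norm_num)
        have a12 := A 1 2 (by norm_num) (by norm_num)
        have b01 := B 0 1 (by norm_num) (by norm_num)
        have b02 := B 0 2 (by norm_num) (by norm_num)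
        have b12 := B 1 2 (by norm_num) (by norm_num)
        have c0 := hc 0 (by norm_num)
        have c1 := hc 1 (by norm_num)
        have c2 := hc 2 (by norm_num)
        clear hc A B h h' hf f1 f2 hF
        simp at *
        tauto
      obtain ⟨b, hb, g1, g2⟩ := key
      rw [← hF i j h 2 b (by norm_num) hb g1, ← hF (i+1) j h' 0 b (by norm_num) hb g2]
      exact f1 _ _ g1 g2
    · intro i j h h'
      have key : ∃ b < 3, good G n (3*i+b) (3*j+2) ∧ good G n (3*i+b) (3*(j+1)+0) := by
        by_contra hc
        push Not at hc
        have A := fun b b' hb hb' => h b 2 b' 2 hb (by norm_num) hb' (by norm_num)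
        have B := fun b b' hb hb' => h' b 0 b' 0 hb (by norm_num) hb' (by norm_num)
        have a01 := A 0 1 (by norm_num) (by norm_num)
        have a02 := A 0 2 (by norm_num) (by norm_num)
        have a12 := A 1 2 (by norm_num) (by norm_num)
        have b01 := B 0 1 (by norm_num) (by norm_num)
        have b02 := B 0 2 (by norm_num) (by norm_num)
        have b12 := B 1 2 (by norm_num) (by norm_num)
        have c0 := hc 0 (by norm_num)
        have c1 := hc 1 (by norm_num)
        have c2 := hc 2 (by norm_num)
        clear hc A B h h' hf f1 f2 hF
        simp at *
        tauto
      obtain ⟨b, hb, g1, g2⟩ := key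
      rw [← hF i j h b 2 hb (by norm_num) g1, ← hF i (j+1) h' b 0 hb (by norm_num) g2]
      exact f2 _ _ g1 g2

/-- Every bad block has a witness among few sets of `2^n` bad labelled edges. -/
lemma witnesses (n : ℕ) : ∀ i j : ℕ, ∃ F : Finset (Finset ((ℕ × ℕ) × Bool)),
    F.card * 81 ≤ 162 ^ (2^n) ∧
    (∀ T ∈ F, T.card = 2^n ∧ ∀ e ∈ T, e.1.1 / 3^n = i ∧ e.1.2 / 3^n = j) ∧
    ∀ w : (ℕ × ℕ) × Bool → Prop,
      ¬ good (fun u v => w ((u, v), false) ∧ w ((u, v), true)) n i j → ∃ T ∈ F, ∀ e ∈ T, ¬ w e := by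
  classical
  induction n with
  | zero =>
    intro i j
    refine ⟨{{((i, j), false)}, {((i, j), true)}}, ?_, ?_, ?_⟩
    · have := Finset.card_le_two (a := ({((i, j), false)} : Finset ((ℕ × ℕ) × Bool))) (b := {((i, j), true)})
      simp only [pow_zero, pow_one]; omega
    · intro T hT
      simp only [Finset.mem_insert, Finset.mem_singleton] at hT
      rcases hT with rfl | rfl <;> simp
    · intro w hw
      simp only [good] at hw
      by_cases h : w ((i, j), false)
      · exact ⟨{((i, j), true)}, by simp, by simp; tauto⟩
      · exact ⟨{((i, j), false)}, by simp, by simpa using h⟩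
  | succ n ih =>
    intro i j
    choose F hc hT hw using ih
    let I := ((Finset.range 3 ×ˢ Finset.range 3) ×ˢ (Finset.range 3 ×ˢ Finset.range 3)).filter
      (fun x => x.1 ≠ x.2)
    refine ⟨I.biUnion fun x => Finset.image₂ (· ∪ ·) (F (3*i+x.1.1) (3*j+x.1.2))
      (F (3*i+x.2.1) (3*j+x.2.2)), ?_, ?_, ?_⟩
    · have hI : I.card ≤ 81 := (Finset.card_filter_le _ _).trans (by simp)
      have h1 : ∀ x ∈ I, (Finset.image₂ (· ∪ ·) (F (3*i+x.1.1) (3*j+x.1.2))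
          (F (3*i+x.2.1) (3*j+x.2.2))).card * (81 * 81) ≤ 162 ^ (2^(n+1)) := by
        intro x _
        have e : (162 : ℕ) ^ (2^(n+1)) = 162 ^ 2^n * 162^2^n := by
          rw [← pow_add]; congr 1; ring
        rw [e]
        calc _ ≤ ((F (3*i+x.1.1) (3*j+x.1.2)).card * (F (3*i+x.2.1) (3*j+x.2.2)).card) * (81*81) :=
              Nat.mul_le_mul_right _ (Finset.card_image₂_le _ _ _)
          _ = ((F (3*i+x.1.1) (3*j+x.1.2)).card * 81) * ((F (3*i+x.2.1) (3*j+x.2.2)).card * 81) := by ring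
          _ ≤ _ := Nat.mul_le_mul (hc _ _) (hc _ _)
      have h2 := Finset.sum_le_card_nsmul I _ _ h1
      rw [← Finset.sum_mul, smul_eq_mul] at h2
      have h3 := Finset.card_biUnion_le (s := I) (t := fun x => Finset.image₂ (· ∪ ·)
        (F (3*i+x.1.1) (3*j+x.1.2)) (F (3*i+x.2.1) (3*j+x.2.2)))
      have h4 := Nat.mul_le_mul_right (162 ^ (2^(n+1))) hI
      have h5 := Nat.mul_le_mul_right (81*81) h3
      omega
    · intro T hTT
      simp only [Finset.mem_biUnion, Finset.mem_image₂] at hTT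
      obtain ⟨⟨⟨a, b⟩, a', b'⟩, hx, T1, h1, T2, h2, rfl⟩ := hTT
      simp only [I, Finset.mem_filter, Finset.mem_product, Finset.mem_range, ne_eq, Prod.mk.injEq] at hx
      obtain ⟨c1, l1⟩ := hT _ _ _ h1
      obtain ⟨c2, l2⟩ := hT _ _ _ h2
      dsimp only at l1 l2
      constructor
      · rw [Finset.card_union_of_disjoint, c1, c2]
        · ring
        · rw [Finset.disjoint_left]
          intro e he1 he2
          have := l1 e he1
          have := l2 e he2
          omega
      · intro e he
        rw [pow_succ, ← Nat.div_div_eq_div_mul, ← Nat.div_div_eq_div_mul]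
        rcases Finset.mem_union.1 he with he | he
        · have := l1 e he
          omega
        · have := l2 e he
          omega
    · intro w hbad
      simp only [good] at hbad
      push Not at hbad
      obtain ⟨a, b, a', b', ha, hb, ha', hb', g1, g2, hne⟩ := hbad
      obtain ⟨T1, m1, w1⟩ := hw _ _ w g1
      obtain ⟨T2, m2, w2⟩ := hw _ _ w g2
      refine ⟨T1 ∪ T2, ?_, ?_⟩
      · simp only [Finset.mem_biUnion, Finset.mem_image₂]
        refine ⟨((a, b), (a', b')), ?_, T1, m1, T2, m2, rfl⟩
        simp only [I, Finset.mem_filter, Finset.mem_product, Finset.mem_range, ne_eq, Prod.mk.injEq]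
        tauto
      · intro e he
        rcases Finset.mem_union.1 he with he | he
        · exact w1 e he
        · exact w2 e he

lemma adj_symm {d : ℕ} {x y : Vertex d} (h : adj x y) : adj y x := by
  unfold adj at *
  rw [← h]
  exact Finset.sum_congr rfl fun i _ => by omega

lemma step_symm {d : ℕ} {ω : Config d} {x y : Vertex d} (h : step ω x y) : step ω y x := by
  obtain ⟨h, ho⟩ := h
  refine ⟨adj_symm h, ?_⟩
  rw [← ho]
  congr 1
  exact Subtype.ext Sym2.eq_swap

lemma cluster_eq {d : ℕ} {ω : Config d} {x y : Vertex d} (h : step ω x y) :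
    cluster ω x = cluster ω y := by
  ext z
  exact ⟨fun hz => Relation.ReflTransGen.head (step_symm h) hz,
    fun hz => Relation.ReflTransGen.head h hz⟩

/-- The quadrant inside `ℤ^d`. -/
def emb (d : ℕ) (x : ℕ × ℕ) : Vertex d :=
  fun k => if k.val = 0 then (x.1 : ℤ) else if k.val = 1 then (x.2 : ℤ) else 0

/-- Right or upper neighbour. -/
def nxt (x : ℕ × ℕ) (b : Bool) : ℕ × ℕ := if b then (x.1, x.2+1) else (x.1+1, x.2)

lemma emb_inj {d : ℕ} (hd : 2 ≤ d) {x y : ℕ × ℕ} (h : emb d x = emb d y) : x = y := by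
  have h0 := congrFun h ⟨0, by omega⟩
  have h1 := congrFun h ⟨1, by omega⟩
  simp [emb] at h0 h1
  exact Prod.ext h0 h1

lemma emb_adj {d : ℕ} (hd : 2 ≤ d) (x : ℕ × ℕ) (b : Bool) : adj (emb d x) (emb d (nxt x b)) := by
  unfold adj
  cases b
  · rw [Finset.sum_eq_single (⟨0, by omega⟩ : Fin d)]
    · simp [emb, nxt]
    · intro k _ hk
      have : k.val ≠ 0 := fun h => hk (Fin.ext h)
      simp [emb, nxt, this]
    · simp
  · rw [Finset.sum_eq_single (⟨1, by omega⟩ : Fin d)]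
    · simp [emb, nxt]
    · intro k _ hk
      have : k.val ≠ 1 := fun h => hk (Fin.ext h)
      simp [emb, nxt, this]
    · simp

/-- Labelled edges of the quadrant. -/
def edg {d : ℕ} (hd : 2 ≤ d) (e : (ℕ × ℕ) × Bool) : Edge d :=
  ⟨s(emb d e.1, emb d (nxt e.1 e.2)), _, _, emb_adj hd e.1 e.2, rfl⟩

lemma edg_inj {d : ℕ} (hd : 2 ≤ d) : Function.Injective (edg hd) := by
  rintro ⟨⟨u, v⟩, b⟩ ⟨⟨u', v'⟩, b'⟩ h
  have h := congrArg Subtype.val h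
  simp only [edg, Sym2.eq_iff] at h
  rcases h with ⟨h1, h2⟩ | ⟨h1, h2⟩ <;> have h1 := emb_inj hd h1 <;> have h2 := emb_inj hd h2 <;>
    cases b <;> cases b' <;> simp [nxt] at h1 h2 ⊢ <;> omega

lemma inf_of_good {d : ℕ} (hd : 2 ≤ d) (ω : Config d)
    (h : ∀ n, good (fun u v => ω (edg hd ((u, v), false)) = true ∧ ω (edg hd ((u, v), true)) = true)
      n 0 0) : ω ∈ ZeroToInfinity d := by
  set G : ℕ → ℕ → Prop := fun u v => ω (edg hd ((u, v), false)) = true ∧ ω (edg hd ((u, v), true)) = true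
  have hin : ∀ n, ∀ x ∈ core G n 0 0, emb d x ∈ cluster ω (origin d) := by
    intro n x hx
    obtain ⟨f, hf, -⟩ := core_conn G (fun x => cluster ω (emb d x))
      (fun i j h _ => cluster_eq ⟨emb_adj hd (i, j) false, h.1⟩)
      (fun i j h _ => cluster_eq ⟨emb_adj hd (i, j) true, h.2⟩) n
    have e := (hf 0 0 (h n) x hx).trans (hf 0 0 (h n) _ (core_zero G h n)).symm
    have e0 : emb d (0, 0) = origin d := by funext k; simp [emb, origin]
    rw [← e0, ← e]
    exact Relation.ReflTransGen.refl
  show (cluster ω (origin d)).Infinite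
  intro hfin
  obtain ⟨M, hM⟩ := (hfin.image (fun y : Vertex d => y ⟨0, by omega⟩)).bddAbove
  obtain ⟨x, hx, hl⟩ := core_far G M.toNat (h _)
  have h1 := hM ⟨_, hin _ x hx, rfl⟩
  have h2 : M.toNat < 3 ^ M.toNat := Nat.lt_pow_self (by norm_num)
  simp [emb] at h1
  omega

lemma cyl {d : ℕ} {p : ℝ} {μ : Measure (Config d)} (h : IsBernoulli d p μ) (T : Finset (Edge d))
    (b : Bool) : μ {ω | ∀ e ∈ T, ω e = b} = ENNReal.ofReal ((if b then p else 1 - p) ^ T.card) := by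
  rw [h.2 T (fun _ => b), Finset.prod_const]

lemma bad_le {d : ℕ} (hd : 2 ≤ d) {p : ℝ} (hp : p ≤ 1) {μ : Measure (Config d)}
    (h : IsBernoulli d p μ) (n : ℕ) :
    μ {ω | ¬ good (fun u v => ω (edg hd ((u, v), false)) = true ∧ ω (edg hd ((u, v), true)) = true)
      n 0 0} ≤ ENNReal.ofReal ((162 * (1 - p)) ^ (2^n)) := by
  classical
  obtain ⟨F, hc, hT, hw⟩ := witnesses n 0 0
  calc _ ≤ μ (⋃ T ∈ F, {ω | ∀ e ∈ T.image (edg hd), ω e = false}) := by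
        apply measure_mono
        intro ω hω
        obtain ⟨T, hTF, hTw⟩ := hw (fun e => ω (edg hd e) = true) hω
        simp only [Set.mem_iUnion]
        refine ⟨T, hTF, ?_⟩
        intro e he
        obtain ⟨e', he', rfl⟩ := Finset.mem_image.1 he
        simpa using hTw e' he'
    _ ≤ ∑ T ∈ F, μ {ω | ∀ e ∈ T.image (edg hd), ω e = false} := measure_biUnion_finset_le _ _
    _ = ∑ T ∈ F, ENNReal.ofReal ((1 - p) ^ 2^n) := by
        apply Finset.sum_congr rfl
        intro T hTF
        rw [cyl h, Finset.card_image_of_injective _ (edg_inj hd), (hT T hTF).1]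
        simp
    _ = ENNReal.ofReal (F.card * (1 - p) ^ 2^n) := by
        rw [Finset.sum_const, nsmul_eq_mul, ENNReal.ofReal_mul (by positivity), ENNReal.ofReal_natCast]
    _ ≤ _ := by
        apply ENNReal.ofReal_le_ofReal
        rw [mul_pow]
        have h1 : F.card ≤ 162 ^ 2^n := by omega
        have h2 : (F.card : ℝ) ≤ 162 ^ 2^n := by exact_mod_cast h1
        have : 0 ≤ 1 - p := by linarith
        gcongr

lemma theta_pos {d : ℕ} (hd : 2 ≤ d) {p : ℝ} (hp : p ≤ 1) (hp' : 162 * (1 - p) ≤ 1/3)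
    {μ : Measure (Config d)} (h : IsBernoulli d p μ) : μ (ZeroToInfinity d) ≠ 0 := by
  intro h0
  have := h.1
  set B : ℕ → Set (Config d) := fun n => {ω | ¬ good (fun u v =>
    ω (edg hd ((u, v), false)) = true ∧ ω (edg hd ((u, v), true)) = true) n 0 0}
  have hcov : (Set.univ : Set (Config d)) ⊆ ZeroToInfinity d ∪ ⋃ n, B n := by
    intro ω _
    by_cases hω : ∀ n, ω ∉ B n
    · left
      exact inf_of_good hd ω (fun n => not_not.1 (hω n))
    · right
      push Not at hω
      simpa using hω
  have hB : ∀ n, μ (B n) ≤ ENNReal.ofReal ((1/3) * (1/3)^n) := by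
    intro n
    refine (bad_le hd hp h n).trans (ENNReal.ofReal_le_ofReal ?_)
    have h3 : n + 1 ≤ 2^n := Nat.lt_two_pow_self
    calc _ ≤ (1/3 : ℝ)^(2^n) := by
          have : 0 ≤ 162 * (1 - p) := by linarith
          gcongr
      _ ≤ (1/3 : ℝ)^(n+1) := pow_le_pow_of_le_one (by norm_num) (by norm_num) h3
      _ = _ := by ring
  have hs : HasSum (fun n : ℕ => (1/3 : ℝ) * (1/3)^n) (1/3 * (1 - 1/3)⁻¹) :=
    (hasSum_geometric_of_lt_one (by norm_num) (by norm_num)).mul_left _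
  have : (1 : ENNReal) ≤ ENNReal.ofReal (1/2) := by
    calc 1 = μ Set.univ := measure_univ.symm
      _ ≤ μ (ZeroToInfinity d ∪ ⋃ n, B n) := measure_mono hcov
      _ ≤ μ (ZeroToInfinity d) + μ (⋃ n, B n) := measure_union_le _ _
      _ ≤ 0 + ∑' n, μ (B n) := by rw [h0]; gcongr; exact measure_iUnion_le _
      _ ≤ 0 + ∑' n, ENNReal.ofReal ((1/3) * (1/3)^n) := by gcongr; exact hB _
      _ = ENNReal.ofReal (1/2) := by
        rw [zero_add, ← ENNReal.ofReal_tsum_of_nonneg (fun n => by positivity) hs.summable, hs.tsum_eq]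
        norm_num
  rw [ENNReal.one_le_ofReal] at this
  norm_num at this

/-- The graph of open edges. -/
def openGraph {d : ℕ} (ω : Config d) : SimpleGraph (Vertex d) where
  Adj := step ω
  symm := ⟨fun _ _ h => step_symm h⟩
  loopless := ⟨fun x h => by obtain ⟨h, -⟩ := h; simp [adj] at h⟩

/-- Unit vectors. -/
def dir {d : ℕ} (c : Fin d × Bool) : Vertex d := Pi.single c.1 (if c.2 then 1 else -1)

lemma adj_dir {d : ℕ} {x y : Vertex d} (h : adj x y) : ∃ c, y = x + dir c := by
  unfold adj at h
  obtain ⟨i, hi⟩ : ∃ i, (x i - y i).natAbs ≠ 0 := by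
    by_contra hc
    push Not at hc
    simp [hc] at h
  rw [← Finset.add_sum_erase _ _ (Finset.mem_univ i)] at h
  have hz : ∑ k ∈ Finset.univ.erase i, (x k - y k).natAbs = 0 := by omega
  rw [Finset.sum_eq_zero_iff] at hz
  have hone : (x i - y i).natAbs = 1 := by omega
  refine ⟨(i, decide (x i < y i)), ?_⟩
  funext k
  by_cases hk : k = i
  · subst hk
    simp only [dir, Pi.add_apply, Pi.single_eq_same, decide_eq_true_eq]
    split_ifs <;> omega
  · have := hz k (by simp [hk])
    simp only [dir, Pi.add_apply, Pi.single_eq_of_ne hk]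
    omega

lemma adj_of_dir {d : ℕ} (x : Vertex d) (c : Fin d × Bool) : adj x (x + dir c) := by
  unfold adj
  rw [Finset.sum_eq_single c.1]
  · simp [dir]; split_ifs <;> simp
  · intro k _ hk
    simp [dir, Pi.single_eq_of_ne hk]
  · simp

/-- Position after `k` steps. -/
def pos {d n : ℕ} (l : Fin n → Fin d × Bool) (k : ℕ) : Vertex d :=
  ∑ i : Fin n with i.val < k, dir (l i)

lemma pos_succ {d n : ℕ} (l : Fin n → Fin d × Bool) (k : Fin n) :
    pos l (k.val+1) = pos l k.val + dir (l k) := by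
  unfold pos
  have : (Finset.univ.filter fun i : Fin n => i.val < k.val+1) =
      insert k (Finset.univ.filter fun i : Fin n => i.val < k.val) := by
    ext i; simp [Fin.ext_iff]; omega
  rw [this, Finset.sum_insert (by simp), add_comm]

/-- The edges of a lattice path. -/
def pedge {d n : ℕ} (l : Fin n → Fin d × Bool) (k : Fin n) : Edge d :=
  ⟨s(pos l k.val, pos l k.val + dir (l k)), _, _, adj_of_dir _ _, rfl⟩

lemma walk_len {d : ℕ} {ω : Config d} {x y : Vertex d} (w : (openGraph ω).Walk x y) (i : Fin d) :
    |y i - x i| ≤ w.length := by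
  induction w with
  | nil => simp
  | @cons a b c h w ih =>
    obtain ⟨e, rfl⟩ := adj_dir h.1
    have : |(a + dir e) i - a i| ≤ 1 := by
      simp only [dir, Pi.add_apply, Pi.single_apply]
      split_ifs <;> simp
    rw [SimpleGraph.Walk.length_cons]
    push_cast
    rw [abs_le] at *
    omega

lemma exists_path {d : ℕ} (ω : Config d) (h : ω ∈ ZeroToInfinity d) (n : ℕ) :
    ∃ l : Fin n → Fin d × Bool, Function.Injective (pedge l) ∧ ∀ k, ω (pedge l k) = true := by
  have hfin : (box d n).Finite := by
    have : box d n = Set.pi Set.univ (fun _ => Set.Icc (-(n:ℤ)) n) := by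
      ext x; simp only [box, Set.mem_ofPred_eq, abs_le, Set.mem_pi, Set.mem_univ, true_imp_iff, Set.mem_Icc]
    rw [this]
    exact Set.Finite.pi fun _ => Set.finite_Icc _ _
  obtain ⟨y, hy, hyb⟩ := Set.Infinite.exists_notMem_finite h hfin
  have hr : (openGraph ω).Reachable (origin d) y := by
    rw [SimpleGraph.reachable_iff_reflTransGen]
    exact hy
  obtain ⟨w, hw⟩ := hr.exists_isPath
  have hlen : n ≤ w.length := by
    simp only [box, Set.mem_ofPred_eq, not_forall, not_le] at hyb
    obtain ⟨i, hi⟩ := hyb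
    have := walk_len w i
    simp only [origin, sub_zero] at this
    omega
  have hs : ∀ k : Fin n, step ω (w.getVert k.val) (w.getVert (k.val+1)) :=
    fun k => w.adj_getVert_succ (by omega)
  choose l hl using fun k => adj_dir (hs k).1
  have hpos : ∀ k, k ≤ n → pos l k = w.getVert k := by
    intro k
    induction k with
    | zero => intro _; simp [pos]; rfl
    | succ k ih =>
      intro hk
      rw [pos_succ l ⟨k, hk⟩, ih (by omega)]
      exact (hl ⟨k, hk⟩).symm
  refine ⟨l, ?_, ?_⟩
  · intro j k hjk
    have e := congrArg Subtype.val hjk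
    simp only [pedge, ← pos_succ] at e
    have hj := j.2
    have hk := k.2
    rw [hpos _ (by omega), hpos _ (by omega), hpos _ (by omega), hpos _ (by omega), Sym2.eq_iff] at e
    have inj : ∀ a b, a ≤ w.length → b ≤ w.length → w.getVert a = w.getVert b → a = b :=
      fun a b ha hb hab => hw.getVert_injOn ha hb hab
    rcases e with ⟨e, -⟩ | ⟨e1, e2⟩
    · exact Fin.ext (inj _ _ (by omega) (by omega) e)
    · have := inj _ _ (by omega) (by omega) e1
      have := inj _ _ (by omega) (by omega) e2
      omega
  · intro k
    obtain ⟨ha, ho⟩ := hs k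
    rw [← ho]
    congr 1
    apply Subtype.ext
    simp only [pedge]
    rw [← pos_succ, hpos _ (by omega), hpos _ (by omega)]

lemma theta_zero {d : ℕ} {p : ℝ} (hp : 0 ≤ p) (hp' : 2 * d * p ≤ 1/2)
    {μ : Measure (Config d)} (h : IsBernoulli d p μ) : μ (ZeroToInfinity d) = 0 := by
  classical
  have key : ∀ n : ℕ, μ (ZeroToInfinity d) ≤ ENNReal.ofReal ((1/2)^n) := by
    intro n
    let F := (Finset.univ : Finset (Fin n → Fin d × Bool)).filter (fun l => Function.Injective (pedge l))
    calc _ ≤ μ (⋃ l ∈ F, {ω | ∀ e ∈ Finset.univ.image (pedge l), ω e = true}) := by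
          apply measure_mono
          intro ω hω
          obtain ⟨l, hl, ho⟩ := exists_path ω hω n
          simp only [Set.mem_iUnion]
          exact ⟨l, by simp [F, hl], by simpa using ho⟩
      _ ≤ ∑ l ∈ F, μ {ω | ∀ e ∈ Finset.univ.image (pedge l), ω e = true} :=
          measure_biUnion_finset_le _ _
      _ = ∑ l ∈ F, ENNReal.ofReal (p ^ n) := by
          apply Finset.sum_congr rfl
          intro l hl
          rw [cyl h, Finset.card_image_of_injective _ (by simpa [F] using hl)]
          simp
      _ = ENNReal.ofReal (F.card * p ^ n) := by
          rw [Finset.sum_const, nsmul_eq_mul, ENNReal.ofReal_mul (by positivity), ENNReal.ofReal_natCast]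
      _ ≤ _ := by
          apply ENNReal.ofReal_le_ofReal
          have h1 : F.card ≤ (d * 2) ^ n := (Finset.card_filter_le _ _).trans (by simp)
          have h2 : (F.card : ℝ) ≤ (d * 2) ^ n := by exact_mod_cast h1
          calc (F.card : ℝ) * p ^ n ≤ (d * 2) ^ n * p ^ n := by gcongr
            _ = (2 * d * p) ^ n := by rw [← mul_pow]; ring
            _ ≤ _ := by gcongr
  have ht : Filter.Tendsto (fun n : ℕ => ENNReal.ofReal ((1/2 : ℝ)^n)) Filter.atTop (nhds 0) := by
    have := ENNReal.tendsto_ofReal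
      (tendsto_pow_atTop_nhds_zero_of_lt_one (r := (1/2 : ℝ)) (by norm_num) (by norm_num))
    simpa using this
  exact le_antisymm (ge_of_tendsto' ht key) bot_le

/-- For every `d ≥ 2`, the critical point `p_c(ℤ^d) = sup {p ∈ (0,1) : θ(p) = 0}` of Bernoulli
bond percolation on `ℤ^d` satisfies `0 < p_c < 1`. -/
theorem pc_nontrivial
    (d : ℕ) (hd : 2 ≤ d)
    (μ : ℝ → Measure (Config d))
    (hμ : ∀ p ∈ Set.Ioo (0 : ℝ) 1, IsBernoulli d p (μ p)) :
    0 < sSup {p : ℝ | p ∈ Set.Ioo (0 : ℝ) 1 ∧ μ p (ZeroToInfinity d) = 0} ∧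
      sSup {p : ℝ | p ∈ Set.Ioo (0 : ℝ) 1 ∧ μ p (ZeroToInfinity d) = 0} < 1 := by
  have hd' : (2 : ℝ) ≤ d := by exact_mod_cast hd
  have hmem : (1 / (4 * d) : ℝ) ∈ {p : ℝ | p ∈ Set.Ioo (0 : ℝ) 1 ∧ μ p (ZeroToInfinity d) = 0} := by
    have h01 : (1 / (4 * d) : ℝ) ∈ Set.Ioo (0 : ℝ) 1 := by
      refine ⟨by positivity, ?_⟩
      rw [div_lt_one (by positivity)]
      linarith
    refine ⟨h01, theta_zero h01.1.le ?_ (hμ _ h01)⟩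
    have : (d : ℝ) ≠ 0 := by positivity
    apply le_of_eq
    field_simp
    norm_num
  constructor
  · refine lt_of_lt_of_le (by positivity) (le_csSup ⟨1, fun p hp => hp.1.2.le⟩ hmem)
  · refine lt_of_le_of_lt (csSup_le ⟨_, hmem⟩ (a := 485 / 486) ?_) (by norm_num)
    rintro p ⟨hp, h0⟩
    by_contra hc
    push Not at hc
    exact theta_pos hd hp.2.le (by linarith) (hμ p hp) h0

end Perc
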